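/- Let m ≥ 3 and n ≥ 3. The randomized Copeland rule is the unique SDS that is strategyproof, anonymous, neutral, and 2/m-Condorcet-consistent. -/

import Mathlib

open Finset

noncomputable section

/-- A preference profile: each voter's strict linear order on the `m`
alternatives is encoded as a ranking permutation, where `R i x` is the rank of
alternative `x` for voter `i` (rank `0` = most preferred). Voter `i` strictly
prefers `x` to `y` iff `R i x < R i y`. -/
abbrev Profile (n m : ℕ) := Fin n → Equiv.Perm (Fin m)

/-- `F R x` is the probability that the social decision scheme `F` assigns to
alternative `x` at profile `R`; `IsSDS F` says every `F R` is a lottery. -/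
def IsSDS {n m : ℕ} (F : Profile n m → Fin m → ℝ) : Prop :=
  (∀ R x, 0 ≤ F R x) ∧ ∀ R, ∑ x, F R x = 1

/-- Stochastic-dominance preference of voter `i` (with preferences as in `R`):
lottery `p` is weakly preferred to lottery `q`. -/
def SDPref {n m : ℕ} (R : Profile n m) (i : Fin n) (p q : Fin m → ℝ) : Prop :=
  ∀ x : Fin m,
    ∑ y ∈ univ.filter (fun y => R i y < R i x), q y ≤
      ∑ y ∈ univ.filter (fun y => R i y < R i x), p y

/-- Strategyproofness: the truthful outcome is SD-preferred to any outcome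
obtainable by a unilateral deviation. -/
def Strategyproof {n m : ℕ} (F : Profile n m → Fin m → ℝ) : Prop :=
  ∀ (R R' : Profile n m) (i : Fin n),
    (∀ j, j ≠ i → R j = R' j) → SDPref R i (F R) (F R')

/-- Anonymity: permuting the voters does not change the outcome. -/
def Anonymous {n m : ℕ} (F : Profile n m → Fin m → ℝ) : Prop :=
  ∀ (π : Equiv.Perm (Fin n)) (R : Profile n m), F (fun i => R (π i)) = F R

/-- The profile obtained from `R` by relabeling the alternatives by `τ`
(in `relabel τ R`, alternative `τ x` gets the rank that `x` has in `R`). -/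
def relabel {n m : ℕ} (τ : Equiv.Perm (Fin m)) (R : Profile n m) : Profile n m :=
  fun i => τ.symm.trans (R i)

/-- Neutrality: relabeling the alternatives permutes the outcome accordingly. -/
def Neutral {n m : ℕ} (F : Profile n m → Fin m → ℝ) : Prop :=
  ∀ (τ : Equiv.Perm (Fin m)) (R : Profile n m) (x : Fin m),
    F (relabel τ R) (τ x) = F R x

/-- The supporting size `n_{xy}(R)`: the number of voters preferring `x` to `y`. -/
def suppSize {n m : ℕ} (R : Profile n m) (x y : Fin m) : ℕ :=
  (univ.filter (fun i => R i x < R i y)).card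

/-- `x` is the Condorcet winner of `R`. -/
def CondorcetWinner {n m : ℕ} (R : Profile n m) (x : Fin m) : Prop :=
  ∀ y, y ≠ x → suppSize R y x < suppSize R x y

/-- `α`-Condorcet-consistency. -/
def CondorcetConsistent {n m : ℕ} (F : Profile n m → Fin m → ℝ) (α : ℝ) : Prop :=
  ∀ R x, CondorcetWinner R x → α ≤ F R x

/-- `x` is Pareto-dominated in `R`. -/
def ParetoDominated {n m : ℕ} (R : Profile n m) (x : Fin m) : Prop :=
  ∃ y, ∀ i, R i y < R i x

/-- `β`-ex post efficiency. -/
def ExPostEff {n m : ℕ} (F : Profile n m → Fin m → ℝ) (β : ℝ) : Prop :=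
  ∀ R x, ParetoDominated R x → F R x ≤ β

/-- The probability that the dictatorial SDS of voter `i` assigns to `x`:
`1` if `x` is voter `i`'s most preferred alternative and `0` otherwise. -/
def dictProb {n m : ℕ} (R : Profile n m) (i : Fin n) (x : Fin m) : ℝ :=
  if ∀ y, R i x ≤ R i y then 1 else 0

/-- `d` is a random dictatorship. -/
def IsRandDict {n m : ℕ} (d : Profile n m → Fin m → ℝ) : Prop :=
  ∃ δ : Fin n → ℝ, (∀ i, 0 ≤ δ i) ∧ ∑ i, δ i = 1 ∧
    ∀ R x, d R x = ∑ i, δ i * dictProb R i x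

/-- `F` can be written as `γ d + (1 - γ) g` with `d` a random dictatorship and
`g` a strategyproof SDS. -/
def DecomposesAt {n m : ℕ} (F : Profile n m → Fin m → ℝ) (γ : ℝ) : Prop :=
  ∃ d g : Profile n m → Fin m → ℝ, IsRandDict d ∧ IsSDS g ∧ Strategyproof g ∧
    ∀ R x, F R x = γ * d R x + (1 - γ) * g R x

/-- `F` is `γ`-randomly dictatorial: `γ ∈ [0,1]` is the maximal value admitting
a decomposition `F = γ d + (1 - γ) g` as above. -/
def RandDictDegree {n m : ℕ} (F : Profile n m → Fin m → ℝ) (γ : ℝ) : Prop :=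
  0 ≤ γ ∧ γ ≤ 1 ∧ DecomposesAt F γ ∧
    ∀ γ', 0 ≤ γ' → γ' ≤ 1 → DecomposesAt F γ' → γ' ≤ γ

/-- The profile `R^{i:yx}` obtained from `R` by swapping `x` and `y` in voter
`i`'s preference relation (used when `x` is ranked directly above `y`). -/
def swapTop {n m : ℕ} (R : Profile n m) (i : Fin n) (x y : Fin m) : Profile n m :=
  Function.update R i ((R i).trans (Equiv.swap (R i x) (R i y)))

/-- The weight vector `b` defining the randomized Copeland rule:
`b k = 2/(m(m-1))` for `k > n/2`, `b k = 1/(m(m-1))` for `k = n/2`, `b k = 0`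
for `k < n/2`. -/
def copelandWeight (n m : ℕ) (k : ℕ) : ℝ :=
  if n < 2 * k then 2 / ((m : ℝ) * ((m : ℝ) - 1))
  else if 2 * k = n then 1 / ((m : ℝ) * ((m : ℝ) - 1))
  else 0

/-- The randomized Copeland rule `f_C(R, x) = ∑_{y ≠ x} b_{n_{xy}(R)}`. -/
def randCopeland (n m : ℕ) : Profile n m → Fin m → ℝ :=
  fun R x => ∑ y ∈ univ.filter (fun y => y ≠ x), copelandWeight n m (suppSize R x y)

/-- A point voting SDS, given by a scoring vector `a` (indexed by ranks
`0, …, m-1`, i.e. `a k` is the score of the `(k+1)`-st ranked alternative). -/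
structure PointVoting (n m : ℕ) where
  a : ℕ → ℝ
  mono : ∀ k l : ℕ, k ≤ l → l < m → a l ≤ a k
  nonneg : ∀ k : ℕ, k < m → 0 ≤ a k
  sum_eq : ∑ k ∈ Finset.range m, a k = 1 / (n : ℝ)

/-- The value of a point voting SDS. -/
def pvVal {n m : ℕ} (pv : PointVoting n m) : Profile n m → Fin m → ℝ :=
  fun R x => ∑ i, pv.a (R i x : ℕ)

/-- A supporting size SDS, given by a vector `b` indexed by supporting sizes
`0, …, n`. -/
structure SupportingSize (n m : ℕ) where
  b : ℕ → ℝ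
  mono : ∀ k l : ℕ, k ≤ l → l ≤ n → b k ≤ b l
  nonneg : ∀ k : ℕ, k ≤ n → 0 ≤ b k
  pair_eq : ∀ k : ℕ, k ≤ n → b k + b (n - k) = 2 / ((m : ℝ) * ((m : ℝ) - 1))

/-- The value of a supporting size SDS. -/
def ssVal {n m : ℕ} (S : SupportingSize n m) : Profile n m → Fin m → ℝ :=
  fun R x => ∑ y ∈ univ.filter (fun y => y ≠ x), S.b (suppSize R x y)

/-- A duple: a strategyproof SDS that puts positive probability on at most two
fixed alternatives. -/
def IsDuple {n m : ℕ} (g : Profile n m → Fin m → ℝ) : Prop :=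
  IsSDS g ∧ Strategyproof g ∧ ∃ x y : Fin m, ∀ R z, z ≠ x → z ≠ y → g R z = 0

/-- A unilateral: a strategyproof SDS that depends only on the preferences of a
single fixed voter. -/
def IsUnilateral {n m : ℕ} (g : Profile n m → Fin m → ℝ) : Prop :=
  IsSDS g ∧ Strategyproof g ∧
    ∃ i : Fin n, ∀ R R' : Profile n m, R i = R' i → g R = g R'

/-- `F` is a convex combination of SDSs satisfying the property `P`. -/
def MixOf {n m : ℕ} (P : (Profile n m → Fin m → ℝ) → Prop)
    (F : Profile n m → Fin m → ℝ) : Prop :=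
  ∃ (K : ℕ) (w : Fin K → ℝ) (g : Fin K → Profile n m → Fin m → ℝ),
    (∀ k, 0 ≤ w k) ∧ ∑ k, w k = 1 ∧ (∀ k, P (g k)) ∧
    ∀ R x, F R x = ∑ k, w k * g k R x

/-- The uniform random dictatorship. -/
def uniformRD (n m : ℕ) : Profile n m → Fin m → ℝ :=
  fun R x => (1 / (n : ℝ)) * ∑ i, dictProb R i x

/-- The uniform lottery. -/
def uniformLottery (n m : ℕ) : Profile n m → Fin m → ℝ :=
  fun _ _ => 1 / (m : ℝ)

/-!
A strategyproof scheme only lets the probability of `x` depend on the sets of alternatives that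
the voters rank above `x`. When one voter moves `y` from directly below `x` to directly above it,
`y` gains exactly what `x` loses, so with anonymity and neutrality the loss depends only on the
number `k` of alternatives above the pair and the number `a` of voters who already prefer `y`.
Letting two alternatives overtake `x` in either order shows that the loss has the form
`u k + v a`, and adding up losses turns the scheme into a convex combination of a point voting
and a supporting size scheme.

No supporting size scheme gives an alternative more than `2 / m`. On the other hand, every point
voting scheme gives less than `2 / m` to some Condorcet winner `x`: put each opponent above `x`
for just under half of the voters, mostly by splitting the opponents into two complementary blocks
and choosing the block sizes so that the two scores of `x` are at most their average. Hence the
point voting part has weight zero, and equality `2 / m` at such a barely winning `x` forces the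
supporting sizes below one half to have weight zero, which leaves only the Copeland weights.
-/

variable {n m : ℕ}

/-! ### Supporting size schemes -/

theorem two_mul_sum_sum_ne {α : Type*} [DecidableEq α] (D : Finset α) (w : α → α → ℝ) (c : ℝ)
    (h : ∀ x ∈ D, ∀ y ∈ D, x ≠ y → w x y + w y x = c) :
    2 * ∑ x ∈ D, ∑ y ∈ D with y ≠ x, w x y = #D * (#D - 1) * c := by
  have swap_sum : ∑ x ∈ D, ∑ y ∈ D with y ≠ x, w x y = ∑ x ∈ D, ∑ y ∈ D with y ≠ x, w y x := by
    simp only [sum_filter]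
    rw [sum_comm]
    simp only [ne_comm]
  have row_sum : ∀ x ∈ D,
      ∑ y ∈ D with y ≠ x, w x y + ∑ y ∈ D with y ≠ x, w y x = (#D - 1) * c := by
    intro x hx
    rw [← sum_add_distrib, sum_congr rfl (g := fun _ => c), sum_const, filter_ne', nsmul_eq_mul,
      cast_card_erase_of_mem hx]
    intro y hy
    rw [mem_filter] at hy
    exact h x hx y hy.1 hy.2.symm
  calc 2 * ∑ x ∈ D, ∑ y ∈ D with y ≠ x, w x y
      = ∑ x ∈ D, (∑ y ∈ D with y ≠ x, w x y + ∑ y ∈ D with y ≠ x, w y x) := by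
        rw [sum_add_distrib, ← swap_sum, two_mul]
    _ = #D * (#D - 1) * c := by
        rw [sum_congr rfl row_sum, sum_const, nsmul_eq_mul, mul_assoc]

theorem cast_sub_one_pos (hm : 2 ≤ m) : (0 : ℝ) < m - 1 := by
  rw [sub_pos]
  exact_mod_cast hm

theorem cast_mul_cast_sub_one_pos (hm : 2 ≤ m) : (0 : ℝ) < m * (m - 1) :=
  mul_pos (by exact_mod_cast (by omega : 0 < m)) (cast_sub_one_pos hm)

theorem cast_mul_cast_sub_one_nonneg (m : ℕ) : (0 : ℝ) ≤ m * (m - 1) := by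
  rcases m with _ | m
  · simp
  · push_cast
    nlinarith [(Nat.cast_nonneg m : (0 : ℝ) ≤ m)]

theorem card_filter_ne (x : Fin m) : (#{y | y ≠ x} : ℝ) = m - 1 := by
  rw [filter_ne', cast_card_erase_of_mem (mem_univ x), card_univ, Fintype.card_fin]

section SuppSize

variable (R : Profile n m)

theorem suppSize_add_suppSize {x y : Fin m} (h : x ≠ y) : suppSize R x y + suppSize R y x = n := by
  have lt_iff_not_lt (i : Fin n) : R i y < R i x ↔ ¬ R i x < R i y := by
    have := (R i).injective.ne h
    grind
  simp only [suppSize, lt_iff_not_lt]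
  rw [card_filter_add_card_filter_not, card_univ, Fintype.card_fin]

theorem suppSize_eq_sub {x y : Fin m} (h : x ≠ y) : suppSize R y x = n - suppSize R x y := by
  have := suppSize_add_suppSize R h
  omega

theorem suppSize_le (x y : Fin m) : suppSize R x y ≤ n := by
  simpa [suppSize] using card_le_univ ({i | R i x < R i y} : Finset (Fin n))

theorem suppSize_comp_perm (π : Equiv.Perm (Fin n)) (x y : Fin m) :
    suppSize (fun i => R (π i)) x y = suppSize R x y :=
  card_equiv π (by simp)

theorem suppSize_relabel (τ : Equiv.Perm (Fin m)) (x y : Fin m) :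
    suppSize (relabel τ R) (τ x) (τ y) = suppSize R x y := by
  simp [suppSize, relabel]

end SuppSize

namespace SupportingSize

variable (S : SupportingSize n m)

theorem b_suppSize_add (R : Profile n m) {x y : Fin m} (h : x ≠ y) :
    S.b (suppSize R x y) + S.b (suppSize R y x) = 2 / ((m : ℝ) * ((m : ℝ) - 1)) := by
  rw [← S.pair_eq _ (suppSize_le R x y), suppSize_eq_sub R h]

theorem b_le {k : ℕ} (hk : k ≤ n) : S.b k ≤ 2 / ((m : ℝ) * ((m : ℝ) - 1)) := by
  linarith [S.pair_eq k hk, S.nonneg (n - k) (Nat.sub_le n k)]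

-- Inside `D` the two duels of a pair always contribute the same total, whatever the votes are.
theorem sum_ssVal (R : Profile n m) (D : Finset (Fin m)) :
    ∑ x ∈ D, ssVal S R x = #D * (#D - 1) / (m * (m - 1)) +
      ∑ x ∈ D, ∑ y ∈ Dᶜ, S.b (suppSize R x y) := by
  have split : ∀ x ∈ D, ssVal S R x =
      ∑ y ∈ D with y ≠ x, S.b (suppSize R x y) + ∑ y ∈ Dᶜ, S.b (suppSize R x y) := by
    intro x hx
    rw [ssVal, ← sum_filter_add_sum_filter_not _ (· ∈ D), filter_filter, filter_filter]
    congr 2 <;> grind [mem_compl]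
  have inner := two_mul_sum_sum_ne D (fun x y => S.b (suppSize R x y)) _
    (fun x _ y _ h => S.b_suppSize_add R h)
  rw [sum_congr rfl split, sum_add_distrib]
  linear_combination inner / 2

theorem isSDS_ssVal (hm : 2 ≤ m) : IsSDS (ssVal S) := by
  refine ⟨fun R x => sum_nonneg fun y _ => S.nonneg _ (suppSize_le R x y), fun R => ?_⟩
  simp [sum_ssVal, (cast_mul_cast_sub_one_pos hm).ne']

theorem strategyproof_ssVal : Strategyproof (ssVal S) := by
  intro R R' i hR x
  rw [sum_ssVal, sum_ssVal]
  gcongr with y hy z hz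
  refine S.mono _ _ (card_le_card fun j hj => ?_) (suppSize_le R y z)
  simp only [mem_filter, mem_univ, true_and, mem_compl, not_lt] at hy hz hj ⊢
  by_cases hji : j = i
  · exact hji ▸ hy.trans_le hz
  · exact hR j hji ▸ hj

theorem anonymous_ssVal : Anonymous (ssVal S) := by
  intro π R
  funext x
  simp only [ssVal, suppSize_comp_perm]

theorem neutral_ssVal : Neutral (ssVal S) := by
  intro τ R x
  refine (sum_equiv τ (by simp) fun y _ => ?_).symm
  rw [suppSize_relabel]

theorem ssVal_le (hm : 2 ≤ m) (R : Profile n m) (x : Fin m) : ssVal S R x ≤ 2 / m := by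
  have := cast_sub_one_pos hm
  calc ssVal S R x ≤ ∑ y with y ≠ x, 2 / ((m : ℝ) * ((m : ℝ) - 1)) :=
        sum_le_sum fun y _ => S.b_le (suppSize_le R x y)
    _ = 2 / m := by
        rw [sum_const, nsmul_eq_mul, card_filter_ne]
        field_simp

/-- The supporting size SDS whose weights are those of the randomized Copeland rule. -/
def copeland (n m : ℕ) : SupportingSize n m where
  b := copelandWeight n m
  mono k l hkl _ := by
    have := one_div_nonneg.mpr (cast_mul_cast_sub_one_nonneg m)
    have two_div : 2 / ((m : ℝ) * ((m : ℝ) - 1)) = 2 * (1 / (m * (m - 1))) := by ring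
    unfold copelandWeight
    rw [two_div]
    split_ifs <;> first | omega | linarith
  nonneg k _ := by
    have := cast_mul_cast_sub_one_nonneg m
    unfold copelandWeight
    split_ifs <;> positivity
  pair_eq k hk := by
    unfold copelandWeight
    split_ifs <;> first | omega | ring

theorem ssVal_copeland : ssVal (copeland n m) = randCopeland n m := rfl

end SupportingSize

theorem condorcetConsistent_randCopeland (hm : 2 ≤ m) :
    CondorcetConsistent (randCopeland n m) (2 / m) := by
  intro R x hx
  have := cast_sub_one_pos hm
  have wins : ∀ y ∈ ({y | y ≠ x} : Finset (Fin m)),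
      copelandWeight n m (suppSize R x y) = 2 / ((m : ℝ) * ((m : ℝ) - 1)) := by
    intro y hy
    have hyx : y ≠ x := by simpa using hy
    have := hx y hyx
    have := suppSize_add_suppSize R hyx
    exact if_pos (by omega)
  rw [randCopeland, sum_congr rfl wins, sum_const, nsmul_eq_mul, card_filter_ne]
  apply le_of_eq
  field_simp

/-! ### Rankings and upper contour sets -/

/-- The strict upper contour set of `x` in the ranking `σ`: the alternatives ranked above `x`. -/
def upperContour (σ : Equiv.Perm (Fin m)) (x : Fin m) : Finset (Fin m) :=
  {y | σ y < σ x}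

theorem mem_upperContour {σ : Equiv.Perm (Fin m)} {x y : Fin m} :
    y ∈ upperContour σ x ↔ σ y < σ x := by
  simp [upperContour]

theorem notMem_upperContour_self (σ : Equiv.Perm (Fin m)) (x : Fin m) : x ∉ upperContour σ x := by
  simp [mem_upperContour]

theorem card_upperContour (σ : Equiv.Perm (Fin m)) (x : Fin m) : #(upperContour σ x) = σ x := by
  rw [← Fin.card_Iio (σ x)]
  exact card_equiv σ (by simp [mem_upperContour])

theorem map_upperContour {σ σ' : Equiv.Perm (Fin m)} {x x' : Fin m} (h : σ x = σ' x') :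
    (upperContour σ x).map (σ.trans σ'.symm).toEmbedding = upperContour σ' x' := by
  ext y
  rw [mem_map_equiv]
  simp [mem_upperContour, h]

/-- A ranking of the alternatives by increasing value of the score `f`. -/
def rankingBy (f : Fin m → ℕ) : Equiv.Perm (Fin m) := (Tuple.sort f)⁻¹

theorem rankingBy_lt {f : Fin m → ℕ} {x y : Fin m} (h : f x < f y) :
    rankingBy f x < rankingBy f y := by
  by_contra! hle
  have := Tuple.monotone_sort f hle
  simp only [rankingBy, Equiv.Perm.coe_inv, Function.comp_apply, Equiv.apply_symm_apply] at this
  omega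

theorem upperContour_rankingBy {f : Fin m → ℕ} {x : Fin m} {W : Finset (Fin m)}
    (above : ∀ y ∈ W, f y < f x) (below : ∀ y ∉ W, y ≠ x → f x < f y) :
    upperContour (rankingBy f) x = W := by
  ext y
  simp only [mem_upperContour]
  refine ⟨fun hyx => ?_, fun hy => rankingBy_lt (above y hy)⟩
  by_contra hy
  have hne : y ≠ x := fun h => hyx.ne (congrArg _ h)
  exact hyx.asymm (rankingBy_lt (below y hy hne))

/-- A ranking that puts exactly the members of `W` above `x`. -/
def contourRanking (W : Finset (Fin m)) (x : Fin m) : Equiv.Perm (Fin m) :=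
  rankingBy fun z => if z ∈ W then 0 else if z = x then 1 else 2

theorem upperContour_contourRanking {W : Finset (Fin m)} {x : Fin m} (hx : x ∉ W) :
    upperContour (contourRanking W x) x = W := by
  apply upperContour_rankingBy <;> grind

/-- A ranking that starts with the members of `W`, followed by `x` and then `y`. -/
def adjacentRanking (W : Finset (Fin m)) (x y : Fin m) : Equiv.Perm (Fin m) :=
  rankingBy fun z => if z ∈ W then 0 else if z = x then 1 else if z = y then 2 else 3

section AdjacentRanking

variable {W : Finset (Fin m)} {x y : Fin m}

theorem upperContour_adjacentRanking_fst (hx : x ∉ W) :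
    upperContour (adjacentRanking W x y) x = W := by
  apply upperContour_rankingBy <;> grind

theorem upperContour_adjacentRanking_snd (hxy : x ≠ y) (hy : y ∉ W) :
    upperContour (adjacentRanking W x y) y = insert x W := by
  apply upperContour_rankingBy <;> grind

end AdjacentRanking

theorem exists_perm_map_eq {V V' : Finset (Fin n)} {i i' : Fin n} (hi : i ∉ V) (hi' : i' ∉ V')
    (hcard : #V = #V') :
    ∃ π : Equiv.Perm (Fin n), π i = i' ∧ V.map π.toEmbedding = V' := by
  have hV := upperContour_contourRanking hi
  have hV' := upperContour_contourRanking hi'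
  have same_rank : contourRanking V i i = contourRanking V' i' i' := by
    rw [Fin.ext_iff, ← card_upperContour, ← card_upperContour, hV, hV', hcard]
  refine ⟨(contourRanking V i).trans (contourRanking V' i').symm, by simp [same_rank], ?_⟩
  simpa only [hV, hV'] using map_upperContour same_rank

theorem exists_perm_map_eq_of_ne {W W' : Finset (Fin m)} {x y x' y' : Fin m}
    (hxy : x ≠ y) (hx : x ∉ W) (hy : y ∉ W) (hxy' : x' ≠ y') (hx' : x' ∉ W') (hy' : y' ∉ W')
    (hcard : #W = #W') :
    ∃ τ : Equiv.Perm (Fin m), τ x = x' ∧ τ y = y' ∧ W.map τ.toEmbedding = W' := by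
  have hW := upperContour_adjacentRanking_fst (y := y) hx
  have hW' := upperContour_adjacentRanking_fst (y := y') hx'
  have same_rank_fst : adjacentRanking W x y x = adjacentRanking W' x' y' x' := by
    rw [Fin.ext_iff, ← card_upperContour, ← card_upperContour, hW, hW', hcard]
  have same_rank_snd : adjacentRanking W x y y = adjacentRanking W' x' y' y' := by
    rw [Fin.ext_iff, ← card_upperContour, ← card_upperContour,
      upperContour_adjacentRanking_snd hxy hy, upperContour_adjacentRanking_snd hxy' hy',
      card_insert_of_notMem hx, card_insert_of_notMem hx', hcard]
  refine ⟨(adjacentRanking W x y).trans (adjacentRanking W' x' y').symm,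
    by simp [same_rank_fst], by simp [same_rank_snd], ?_⟩
  simpa only [hW, hW'] using map_upperContour same_rank_fst

/-- `D` is a top set of `σ` if every member of `D` is ranked above every non-member. -/
def IsTopSet (σ : Equiv.Perm (Fin m)) (D : Finset (Fin m)) : Prop :=
  ∀ x ∈ D, ∀ y ∉ D, σ x < σ y

theorem isTopSet_upperContour (σ : Equiv.Perm (Fin m)) (x : Fin m) :
    IsTopSet σ (upperContour σ x) := by
  intro y hy z hz
  simp only [mem_upperContour, not_lt] at hy hz
  exact hy.trans_le hz

theorem isTopSet_insert_upperContour (σ : Equiv.Perm (Fin m)) (x : Fin m) :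
    IsTopSet σ (insert x (upperContour σ x)) := by
  intro y hy z hz
  simp only [mem_upperContour, mem_insert, not_or, not_lt] at hy hz
  have hxz : σ x < σ z := hz.2.lt_of_ne (σ.injective.ne hz.1).symm
  rcases hy with rfl | hy
  exacts [hxz, hy.trans hxz]

theorem IsTopSet.eq_univ_or_eq_upperContour {σ : Equiv.Perm (Fin m)} {D : Finset (Fin m)}
    (hD : IsTopSet σ D) : D = univ ∨ ∃ x, D = upperContour σ x := by
  rcases Dᶜ.eq_empty_or_nonempty with hempty | hne
  · exact .inl (by simpa using hempty)
  obtain ⟨x, hx, hmin⟩ := exists_min_image Dᶜ σ hne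
  refine .inr ⟨x, ext fun y => ?_⟩
  simp only [mem_compl] at hx hmin
  simp only [mem_upperContour]
  refine ⟨fun hy => hD y hy x hx, fun hyx => ?_⟩
  by_contra hy
  exact (hmin y hy).not_gt hyx

/-! ### Strategyproof schemes depend only on contours -/

variable {F : Profile n m → Fin m → ℝ}

namespace Strategyproof

theorem sum_update_le (hSP : Strategyproof F) (hF : IsSDS F) {R : Profile n m} {i : Fin n}
    {D : Finset (Fin m)} (hD : IsTopSet (R i) D) (σ : Equiv.Perm (Fin m)) :
    ∑ y ∈ D, F (Function.update R i σ) y ≤ ∑ y ∈ D, F R y := by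
  rcases hD.eq_univ_or_eq_upperContour with rfl | ⟨x, rfl⟩
  · rw [hF.2, hF.2]
  · exact hSP R _ i (fun j hj => (Function.update_of_ne hj _ _).symm) x

theorem sum_update_eq (hSP : Strategyproof F) (hF : IsSDS F) {R : Profile n m} {i : Fin n}
    {D : Finset (Fin m)} {σ : Equiv.Perm (Fin m)} (hD : IsTopSet (R i) D) (hD' : IsTopSet σ D) :
    ∑ y ∈ D, F (Function.update R i σ) y = ∑ y ∈ D, F R y := by
  refine le_antisymm (hSP.sum_update_le hF hD σ) ?_
  have := hSP.sum_update_le hF (R := Function.update R i σ) (i := i) (by simpa using hD') (R i)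
  simpa using this

theorem update_apply_eq (hSP : Strategyproof F) (hF : IsSDS F) {R : Profile n m} {i : Fin n}
    {σ : Equiv.Perm (Fin m)} {x : Fin m} (h : upperContour σ x = upperContour (R i) x) :
    F (Function.update R i σ) x = F R x := by
  have strict := hSP.sum_update_eq hF (isTopSet_upperContour (R i) x)
    (h ▸ isTopSet_upperContour σ x)
  have weak := hSP.sum_update_eq hF (isTopSet_insert_upperContour (R i) x)
    (h ▸ isTopSet_insert_upperContour σ x)
  rw [sum_insert (notMem_upperContour_self _ _), sum_insert (notMem_upperContour_self _ _)] at weak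
  linarith

theorem apply_eq_of_upperContour_eq (hSP : Strategyproof F) (hF : IsSDS F) {R R' : Profile n m}
    {x : Fin m} (h : ∀ i, upperContour (R i) x = upperContour (R' i) x) : F R x = F R' x := by
  suffices ∀ T : Finset (Fin n), F (T.piecewise R R') x = F R' x by simpa using this univ
  intro T
  induction T using Finset.induction_on with
  | empty => simp
  | insert i T hi ih =>
    rw [piecewise_insert, hSP.update_apply_eq hF, ih]
    rw [piecewise_eq_of_notMem _ _ _ hi, h]

end Strategyproof

/-- The probability of `x` at a profile in which voter `i` ranks exactly `S i` above `x`; it is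
meaningful when `x` belongs to no `S i`. -/
def contourProb (F : Profile n m → Fin m → ℝ) (x : Fin m) (S : Fin n → Finset (Fin m)) : ℝ :=
  F (fun i => contourRanking (S i) x) x

theorem Strategyproof.apply_eq_contourProb (hSP : Strategyproof F) (hF : IsSDS F)
    {R : Profile n m} {x : Fin m} {S : Fin n → Finset (Fin m)}
    (h : ∀ i, upperContour (R i) x = S i) : F R x = contourProb F x S := by
  refine hSP.apply_eq_of_upperContour_eq hF fun i => ?_
  rw [upperContour_contourRanking (h i ▸ notMem_upperContour_self _ _), h]

theorem upperContour_relabel (τ : Equiv.Perm (Fin m)) (R : Profile n m) (i : Fin n) (x : Fin m) :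
    upperContour (relabel τ R i) (τ x) = (upperContour (R i) x).map τ.toEmbedding := by
  ext y
  simp [mem_upperContour, relabel, mem_map_equiv]

theorem contourProb_map (hF : IsSDS F) (hSP : Strategyproof F) (hA : Anonymous F) (hN : Neutral F)
    {x : Fin m} {S : Fin n → Finset (Fin m)} (hx : ∀ i, x ∉ S i) (τ : Equiv.Perm (Fin m))
    (π : Equiv.Perm (Fin n)) :
    contourProb F (τ x) (fun i => (S (π i)).map τ.toEmbedding) = contourProb F x S := by
  rw [contourProb.eq_def F x, ← hA π, ← hN τ]
  refine (hSP.apply_eq_contourProb hF fun i => ?_).symm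
  rw [upperContour_relabel, upperContour_contourRanking (hx _)]

-- Strategyproofness fixes the total probability of the alternatives above the pair and of those
-- above or in it, so the swap only moves probability between `x` and `y`.
theorem Strategyproof.adjacent_swap (hSP : Strategyproof F) (hF : IsSDS F) (R : Profile n m)
    (i : Fin n) {W : Finset (Fin m)} {x y : Fin m} (hxy : x ≠ y) (hx : x ∉ W) (hy : y ∉ W) :
    let R₁ := Function.update R i (adjacentRanking W x y)
    let R₂ := Function.update R i (adjacentRanking W y x)
    F R₁ x - F R₂ x = F R₂ y - F R₁ y ∧ 0 ≤ F R₁ x - F R₂ x := by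
  intro R₁ R₂
  have hR₂ : R₂ = Function.update R₁ i (adjacentRanking W y x) := by simp [R₁, R₂]
  have hR₁i : R₁ i = adjacentRanking W x y := by simp [R₁]
  have top_W {x y : Fin m} (hx : x ∉ W) : IsTopSet (adjacentRanking W x y) W := by
    simpa only [upperContour_adjacentRanking_fst hx] using
      isTopSet_upperContour (adjacentRanking W x y) x
  have top_fst : IsTopSet (adjacentRanking W x y) (insert x W) := by
    simpa only [upperContour_adjacentRanking_fst hx] using
      isTopSet_insert_upperContour (adjacentRanking W x y) x
  have top_snd {x y : Fin m} (hxy : x ≠ y) (hy : y ∉ W) :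
      IsTopSet (adjacentRanking W x y) (insert y (insert x W)) := by
    simpa only [upperContour_adjacentRanking_snd hxy hy] using
      isTopSet_insert_upperContour (adjacentRanking W x y) y
  have above := hSP.sum_update_eq hF (hR₁i ▸ top_W hx) (top_W (x := y) (y := x) hy)
  have above_or_in := hSP.sum_update_eq hF (hR₁i ▸ top_snd hxy hy)
    (insert_comm x y W ▸ top_snd hxy.symm hx)
  have mono := hSP.sum_update_le hF (hR₁i ▸ top_fst) (adjacentRanking W y x)
  rw [← hR₂] at above above_or_in mono
  have hy' : y ∉ insert x W := by simp [hxy.symm, hy]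
  simp only [sum_insert hy', sum_insert hx] at above_or_in mono
  constructor <;> linarith

/-! ### The loss of being overtaken -/

/-- The number of indices `i` whose set `S i` contains `y`. -/
def coverCount {ι α : Type*} [Fintype ι] [DecidableEq α] (S : ι → Finset α) (y : α) : ℕ :=
  #{i | y ∈ S i}

theorem coverCount_lt {ι α : Type*} [Fintype ι] [DecidableEq α] {S : ι → Finset α} {i : ι} {y : α}
    (h : y ∉ S i) : coverCount S y < Fintype.card ι :=
  card_lt_univ_of_notMem (x := i) (by simpa using h)

section CoverCount

variable {ι α : Type*} [Fintype ι] [DecidableEq ι] [DecidableEq α] {S : ι → Finset α} {i : ι}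
  {y z : α}

theorem coverCount_update_insert_self (h : y ∉ S i) :
    coverCount (Function.update S i (insert y (S i))) y = coverCount S y + 1 := by
  have : ({j | y ∈ Function.update S i (insert y (S i)) j} : Finset ι) =
      insert i ({j | y ∈ S j} : Finset ι) := by
    ext j
    by_cases hj : j = i <;> simp [Function.update_apply, hj]
  rw [coverCount, this, card_insert_of_notMem (by simpa using h), coverCount]

theorem coverCount_update_insert_of_ne (h : z ≠ y) :
    coverCount (Function.update S i (insert y (S i))) z = coverCount S z := by
  have (j : ι) : z ∈ Function.update S i (insert y (S i)) j ↔ z ∈ S j := by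
    by_cases hj : j = i
    · subst hj
      simp [h]
    · simp [hj]
  simp only [coverCount, this]

end CoverCount

/-- The situation in which voter `i` is about to move `y` from directly below `x` to directly
above `x`, the sets `S` being the upper contour sets of `x`. -/
structure Overtaking (n m : ℕ) where
  x : Fin m
  y : Fin m
  i : Fin n
  S : Fin n → Finset (Fin m)
  ne : x ≠ y
  x_notMem : ∀ j, x ∉ S j
  y_notMem : y ∉ S i

/-- A ranking with upper contour set `W` at `x` in which `y` comes first if it belongs to `W` and
last otherwise. -/
def polarRanking (W : Finset (Fin m)) (x y : Fin m) : Equiv.Perm (Fin m) :=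
  rankingBy fun z =>
    if z ∈ W then if z = y then 0 else 1 else if z = x then 2 else if z = y then 4 else 3

theorem upperContour_polarRanking_fst {W : Finset (Fin m)} {x y : Fin m} (hx : x ∉ W) :
    upperContour (polarRanking W x y) x = W := by
  apply upperContour_rankingBy <;> grind

theorem upperContour_polarRanking_snd {W : Finset (Fin m)} {x y : Fin m} (hxy : x ≠ y) :
    upperContour (polarRanking W x y) y = if y ∈ W then ∅ else univ.erase y := by
  apply upperContour_rankingBy <;> grind

namespace Overtaking

/-- The upper contour sets of `x` after the overtaking. -/
def next (O : Overtaking n m) : Fin n → Finset (Fin m) :=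
  Function.update O.S O.i (insert O.y (O.S O.i))

/-- The probability that `x` loses to `y` in the overtaking. -/
def loss (F : Profile n m → Fin m → ℝ) (O : Overtaking n m) : ℝ :=
  contourProb F O.x O.S - contourProb F O.x O.next

/-- The upper contour sets of `y` when voter `i` ranks exactly `W` above `y` and every other
voter ranks `y` first or last, according to whether `y` is above `x`. -/
def polarContours (O : Overtaking n m) (W : Finset (Fin m)) : Fin n → Finset (Fin m) :=
  Function.update (fun j => if O.y ∈ O.S j then ∅ else univ.erase O.y) O.i W

theorem notMem_polarContours (O : Overtaking n m) {W : Finset (Fin m)} (hW : O.y ∉ W)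
    (j : Fin n) : O.y ∉ O.polarContours W j := by
  by_cases hj : j = O.i
  · simpa [polarContours, hj] using hW
  · simp only [polarContours, Function.update_of_ne hj]
    split_ifs <;> simp

-- The probability of `x` does not change if every other voter moves `y` away from `x`.
theorem loss_eq_and_nonneg (hF : IsSDS F) (hSP : Strategyproof F) (O : Overtaking n m) :
    loss F O = contourProb F O.y (O.polarContours (O.S O.i)) -
        contourProb F O.y (O.polarContours (insert O.x (O.S O.i))) ∧
      0 ≤ loss F O := by
  obtain ⟨x, y, i, S, hxy, hx, hy⟩ := O
  let R : Profile n m := fun j => polarRanking (S j) x y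
  let R₁ := Function.update R i (adjacentRanking (S i) x y)
  let R₂ := Function.update R i (adjacentRanking (S i) y x)
  have contour_of_update {σ : Equiv.Perm (Fin m)} {z : Fin m} {T : Fin n → Finset (Fin m)}
      (hi : upperContour σ z = T i) (hj : ∀ j ≠ i, upperContour (R j) z = T j) :
      F (Function.update R i σ) z = contourProb F z T := by
    refine hSP.apply_eq_contourProb hF fun j => ?_
    by_cases h : j = i
    · subst h
      simpa using hi
    · simpa [h] using hj j h
  have x_before : F R₁ x = contourProb F x S :=
    contour_of_update (upperContour_adjacentRanking_fst (hx i))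
      fun j _ => upperContour_polarRanking_fst (hx j)
  have x_after : F R₂ x = contourProb F x (Function.update S i (insert y (S i))) :=
    contour_of_update (by simpa using upperContour_adjacentRanking_snd hxy.symm (hx i))
      fun j h => by simpa [h] using upperContour_polarRanking_fst (hx j)
  have y_before : F R₁ y = contourProb F y (polarContours ⟨x, y, i, S, hxy, hx, hy⟩ _) :=
    contour_of_update (by simpa [polarContours] using upperContour_adjacentRanking_snd hxy hy)
      fun j h => by simpa [polarContours, h] using upperContour_polarRanking_snd hxy
  have y_after : F R₂ y = contourProb F y (polarContours ⟨x, y, i, S, hxy, hx, hy⟩ _) :=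
    contour_of_update (by simpa [polarContours] using upperContour_adjacentRanking_fst hy)
      fun j h => by simpa [polarContours, h] using upperContour_polarRanking_snd hxy
  simpa only [loss, next, ← x_before, ← x_after, ← y_before, ← y_after] using
    hSP.adjacent_swap hF R i hxy (hx i) hy

theorem polarContours_map {O O' : Overtaking n m} {τ : Equiv.Perm (Fin m)}
    {π : Equiv.Perm (Fin n)} (hy : τ O.y = O'.y) (hi : π O'.i = O.i)
    (hπ : ∀ j, O.y ∈ O.S (π j) ↔ O'.y ∈ O'.S j) (W : Finset (Fin m)) :
    O'.polarContours (W.map τ.toEmbedding) =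
      fun j => (O.polarContours W (π j)).map τ.toEmbedding := by
  funext j
  by_cases hj : j = O'.i
  · simp [polarContours, hj, hi]
  · have hj' : π j ≠ O.i := fun h => hj (π.injective (h.trans hi.symm))
    simp only [polarContours, Function.update_of_ne hj, Function.update_of_ne hj', hπ j]
    split_ifs
    · simp
    · simp [map_erase, hy]

theorem loss_eq_of_card_eq_of_coverCount_eq (hF : IsSDS F) (hSP : Strategyproof F)
    (hA : Anonymous F) (hN : Neutral F) {O O' : Overtaking n m}
    (hcard : #(O.S O.i) = #(O'.S O'.i)) (hcover : coverCount O.S O.y = coverCount O'.S O'.y) :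
    loss F O = loss F O' := by
  obtain ⟨τ, hτx, hτy, hτS⟩ := exists_perm_map_eq_of_ne O.ne (O.x_notMem _) O.y_notMem O'.ne
    (O'.x_notMem _) O'.y_notMem hcard
  obtain ⟨π, hπi, hπ⟩ := exists_perm_map_eq (V := {j | O'.y ∈ O'.S j}) (V' := {j | O.y ∈ O.S j})
    (by simpa using O'.y_notMem) (by simpa using O.y_notMem) hcover.symm
  have hπ' (j : Fin n) : O.y ∈ O.S (π j) ↔ O'.y ∈ O'.S j := by
    have := Finset.ext_iff.1 hπ (π j)
    rw [mem_map_equiv] at this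
    simpa using this.symm
  have contourProb_eq {W : Finset (Fin m)} (hW : O.y ∉ W) :
      contourProb F O.y (O.polarContours W) =
        contourProb F O'.y (O'.polarContours (W.map τ.toEmbedding)) := by
    rw [polarContours_map hτy hπi hπ', ← hτy,
      contourProb_map hF hSP hA hN (O.notMem_polarContours hW)]
  rw [(loss_eq_and_nonneg hF hSP O).1, (loss_eq_and_nonneg hF hSP O').1,
    contourProb_eq O.y_notMem, contourProb_eq (by simp [O.ne.symm, O.y_notMem]), map_insert, hτS]
  simp [hτx]

theorem exists_loss_eq (hF : IsSDS F) (hSP : Strategyproof F) (hA : Anonymous F)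
    (hN : Neutral F) : ∃ φ : ℕ → ℕ → ℝ, (∀ k a, 0 ≤ φ k a) ∧
      ∀ O : Overtaking n m, loss F O = φ #(O.S O.i) (coverCount O.S O.y) := by
  let key (O : Overtaking n m) : ℕ × ℕ := (#(O.S O.i), coverCount O.S O.y)
  have factors : (loss F).FactorsThrough key := fun O O' h =>
    loss_eq_of_card_eq_of_coverCount_eq hF hSP hA hN (congrArg Prod.fst h) (congrArg Prod.snd h)
  refine ⟨fun k a => Function.extend key (loss F) 0 (k, a), fun k a => ?_,
    fun O => (factors.extend_apply 0 O).symm⟩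
  change 0 ≤ Function.extend key (loss F) 0 (k, a)
  classical
  rw [Function.extend_def]
  split_ifs with h
  exacts [(loss_eq_and_nonneg hF hSP _).2, le_rfl]

end Overtaking

theorem card_add_two_le {α : Type*} [Fintype α] {W : Finset α} {x y : α}
    (hxy : x ≠ y) (hx : x ∉ W) (hy : y ∉ W) : #W + 2 ≤ Fintype.card α := by
  classical
  have := card_le_univ (insert x (insert y W))
  rwa [card_insert_of_notMem (by simp [hxy, hx]), card_insert_of_notMem hy] at this

theorem exists_add_eq_of_exchange {φ : ℕ → ℕ → ℝ} {M N : ℕ} (hM : 0 < M)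
    (nonneg : ∀ k a, 0 ≤ φ k a)
    (exchange : ∀ k, k + 1 < M → ∀ a < N, ∀ b < N, φ k a + φ (k + 1) b = φ k b + φ (k + 1) a) :
    ∃ u v : ℕ → ℝ, (∀ k < M, 0 ≤ u k) ∧ (∀ a, 0 ≤ v a) ∧
      ∀ k < M, ∀ a < N, φ k a = u k + v a := by
  have diff_eq (k : ℕ) (hk : k < M) (a : ℕ) (ha : a < N) : φ k a - φ k 0 = φ 0 a - φ 0 0 := by
    induction k with
    | zero => rfl
    | succ k ih => linarith [exchange k hk a ha 0 (by omega), ih (by omega)]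
  -- Subtracting the smallest value of `φ · 0` keeps both summands nonnegative.
  obtain ⟨k₀, hk₀, hmin⟩ := exists_min_image (range M) (φ · 0) ⟨0, mem_range.2 hM⟩
  simp only [mem_range] at hk₀ hmin
  refine ⟨fun k => φ k 0 - φ k₀ 0, φ k₀, fun k hk => sub_nonneg.2 (hmin k hk), nonneg k₀,
    fun k hk a ha => ?_⟩
  linarith [diff_eq k hk a ha, diff_eq k₀ hk₀ a ha]

theorem eq_sub_sum_of_insert_eq {ι α : Type*} [Fintype ι] [DecidableEq ι] [DecidableEq α]
    {A : Finset α} {G : (ι → Finset α) → ℝ} {u v : ℕ → ℝ}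
    (step : ∀ (S : ι → Finset α) (i : ι) (y : α), (∀ j, S j ⊆ A) → y ∈ A → y ∉ S i →
      G S - G (Function.update S i (insert y (S i))) = u #(S i) + v (coverCount S y))
    {S : ι → Finset α} (hS : ∀ j, S j ⊆ A) :
    G S = G (fun _ => ∅) - ∑ i, ∑ k ∈ range #(S i), u k -
      ∑ y ∈ A, ∑ a ∈ range (coverCount S y), v a := by
  induction S using Finset.induction_on_pi with
  | h0 => simp [coverCount]
  | step S i y hy ih =>
    have hSA (j : ι) : S j ⊆ A := by
      have := hS j
      by_cases hj : j = i
      · subst hj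
        rw [Function.update_self] at this
        exact (subset_insert y _).trans this
      · rwa [Function.update_of_ne hj] at this
    have hyA : y ∈ A := hS i (by simp)
    have size_step : ∑ j, ∑ k ∈ range #(Function.update S i (insert y (S i)) j), u k =
        ∑ j, ∑ k ∈ range #(S j), u k + u #(S i) := by
      rw [← sub_eq_iff_eq_add', ← sum_sub_distrib, Fintype.sum_eq_single i]
      · simp [card_insert_of_notMem hy, sum_range_succ]
      · intro j hj
        simp [hj]
    have cover_step :
        ∑ z ∈ A, ∑ a ∈ range (coverCount (Function.update S i (insert y (S i))) z), v a =
        ∑ z ∈ A, ∑ a ∈ range (coverCount S z), v a + v (coverCount S y) := by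
      rw [← sub_eq_iff_eq_add', ← sum_sub_distrib, sum_eq_single_of_mem y hyA]
      · rw [coverCount_update_insert_self hy, sum_range_succ]
        ring
      · intro z _ hz
        rw [coverCount_update_insert_of_ne hz, sub_self]
    linarith [step S i y hSA hyA hy, ih hSA]

namespace Overtaking

variable {φ : ℕ → ℕ → ℝ}

-- `y` and `z` can overtake `x` in either order, with the same final result.
theorem loss_exchange
    (hφ : ∀ O : Overtaking n m, loss F O = φ #(O.S O.i) (coverCount O.S O.y))
    {x y z : Fin m} {i : Fin n} {S : Fin n → Finset (Fin m)} (hxy : x ≠ y) (hxz : x ≠ z)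
    (hyz : y ≠ z) (hx : ∀ j, x ∉ S j) (hy : y ∉ S i) (hz : z ∉ S i) :
    φ #(S i) (coverCount S y) + φ (#(S i) + 1) (coverCount S z) =
      φ #(S i) (coverCount S z) + φ (#(S i) + 1) (coverCount S y) := by
  have two_steps {y z : Fin m} (hxy : x ≠ y) (hxz : x ≠ z) (hyz : y ≠ z) (hy : y ∉ S i)
      (hz : z ∉ S i) : φ #(S i) (coverCount S y) + φ (#(S i) + 1) (coverCount S z) =
        contourProb F x S - contourProb F x (Function.update S i (insert z (insert y (S i)))) := by
    let first : Overtaking n m := ⟨x, y, i, S, hxy, hx, hy⟩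
    let second : Overtaking n m := ⟨x, z, i, first.next, hxz, fun j => by
      by_cases hj : j = i
      · subst hj
        simp [first, next, hxy, hx]
      · simp [first, next, hj, hx], by simp [first, next, hyz.symm, hz]⟩
    have first_loss := hφ first
    have second_loss := hφ second
    simp only [second, first, loss, next, Function.update_self, Function.update_idem,
      card_insert_of_notMem hy, coverCount_update_insert_of_ne hyz.symm]
      at first_loss second_loss
    linarith
  rw [two_steps hxy hxz hyz hy hz, two_steps hxz hxy hyz.symm hz hy, insert_comm]

theorem exists_contours_of_coverCount {k a b : ℕ} (hk : k + 3 ≤ m) (ha : a < n) (hb : b < n) :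
    ∃ (x y z : Fin m) (i : Fin n) (S : Fin n → Finset (Fin m)), x ≠ y ∧ x ≠ z ∧ y ≠ z ∧
      (∀ j, x ∉ S j) ∧ y ∉ S i ∧ z ∉ S i ∧
      #(S i) = k ∧ coverCount S y = a ∧ coverCount S z = b := by
  obtain ⟨x, y, z, hxy, hxz, hyz⟩ :=
    Fintype.two_lt_card_iff.1 (show 2 < Fintype.card (Fin m) by rw [Fintype.card_fin]; omega)
  let i : Fin n := ⟨0, by omega⟩
  obtain ⟨W, hW, hWcard⟩ : ∃ W ⊆ ({x, y, z} : Finset (Fin m))ᶜ, #W = k := by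
    refine exists_subset_card_eq ?_
    rw [card_compl, card_eq_three.2 ⟨x, y, z, hxy, hxz, hyz, rfl⟩, Fintype.card_fin]
    omega
  have exists_voters {a : ℕ} (ha : a < n) : ∃ T ⊆ univ.erase i, #T = a :=
    exists_subset_card_eq (by simpa using Nat.le_sub_one_of_lt ha)
  obtain ⟨A, hA, hAcard⟩ := exists_voters ha
  obtain ⟨B, hB, hBcard⟩ := exists_voters hb
  simp only [subset_iff, mem_compl, mem_insert, mem_singleton, not_or] at hW
  let S (j : Fin n) : Finset (Fin m) :=
    if j = i then W else univ.filter fun t => t = y ∧ j ∈ A ∨ t = z ∧ j ∈ B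
  have hy : ({j | y ∈ S j} : Finset (Fin n)) = A := by grind
  have hz : ({j | z ∈ S j} : Finset (Fin n)) = B := by grind
  exact ⟨x, y, z, i, S, hxy, hxz, hyz, by grind, by grind, by grind, by simp [S, hWcard],
    by rw [coverCount, hy, hAcard], by rw [coverCount, hz, hBcard]⟩

end Overtaking

theorem contourProb_empty_eq (hF : IsSDS F) (hSP : Strategyproof F) (hA : Anonymous F)
    (hN : Neutral F) (x y : Fin m) :
    contourProb F x (fun _ => ∅) = contourProb F y (fun _ => ∅) := by
  simpa using contourProb_map hF hSP hA hN (fun _ => notMem_empty y) (Equiv.swap y x) 1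

theorem Strategyproof.exists_contourProb_eq (hSP : Strategyproof F) (hF : IsSDS F)
    (hA : Anonymous F) (hN : Neutral F) (hm : 2 ≤ m) :
    ∃ u v : ℕ → ℝ, (∀ k, k + 1 < m → 0 ≤ u k) ∧ (∀ a, 0 ≤ v a) ∧
      ∀ (x : Fin m) (S : Fin n → Finset (Fin m)), (∀ j, S j ⊆ univ.erase x) →
        contourProb F x S = contourProb F x (fun _ => ∅) - ∑ i, ∑ k ∈ range #(S i), u k -
          ∑ y ∈ univ.erase x, ∑ a ∈ range (coverCount S y), v a := by
  obtain ⟨φ, nonneg, hφ⟩ := Overtaking.exists_loss_eq hF hSP hA hN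
  have exchange (k : ℕ) (hk : k + 1 < m - 1) (a : ℕ) (ha : a < n) (b : ℕ) (hb : b < n) :
      φ k a + φ (k + 1) b = φ k b + φ (k + 1) a := by
    obtain ⟨x, y, z, i, S, hxy, hxz, hyz, hx, hy, hz, rfl, rfl, rfl⟩ :=
      Overtaking.exists_contours_of_coverCount (by omega : k + 3 ≤ m) ha hb
    exact Overtaking.loss_exchange hφ hxy hxz hyz hx hy hz
  obtain ⟨u, v, hu, hv, hφuv⟩ := exists_add_eq_of_exchange (by omega) nonneg exchange
  refine ⟨u, v, fun k hk => hu k (by omega), hv, fun x S hS => ?_⟩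
  refine eq_sub_sum_of_insert_eq (G := contourProb F x) (fun S i y hS hy hyS => ?_) hS
  have hxy : x ≠ y := (ne_of_mem_erase hy).symm
  have hx (j : Fin n) : x ∉ S j := fun h => notMem_erase x univ (hS j h)
  have card_bound : #(S i) + 2 ≤ m := by simpa using card_add_two_le hxy (hx i) hyS
  have cover_bound : coverCount S y < n := by simpa using coverCount_lt hyS
  rw [← hφuv _ (by omega) _ cover_bound]
  exact hφ ⟨x, y, i, S, hxy, hx, hyS⟩

/-! ### Decomposition into a point voting and a supporting size scheme -/

theorem Strategyproof.exists_apply_eq_sub (hSP : Strategyproof F) (hF : IsSDS F)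
    (hA : Anonymous F) (hN : Neutral F) (hm : 2 ≤ m) :
    ∃ (D : ℝ) (U V : ℕ → ℝ), (∀ k l, k ≤ l → l < m → U k ≤ U l) ∧ Monotone V ∧ V 0 = 0 ∧
      ∀ R x, F R x = D - ∑ i, U (R i x) - ∑ y with y ≠ x, V (suppSize R y x) := by
  obtain ⟨u, v, hu, hv, huv⟩ := hSP.exists_contourProb_eq hF hA hN hm
  refine ⟨contourProb F ⟨0, by omega⟩ fun _ => ∅, fun k => ∑ j ∈ range k, u j,
    fun k => ∑ a ∈ range k, v a, fun k l hkl hl => ?_, fun k l hkl => ?_, sum_range_zero _,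
    fun R x => ?_⟩
  · refine sum_le_sum_of_subset_of_nonneg (range_mono hkl) fun j hj _ => hu j ?_
    rw [mem_range] at hj
    omega
  · exact sum_le_sum_of_subset_of_nonneg (range_mono hkl) fun a _ _ => hv a
  · have contour_subset (i : Fin n) : upperContour (R i) x ⊆ univ.erase x := fun y hy =>
      mem_erase.2 ⟨fun h => notMem_upperContour_self (R i) x (h ▸ hy), mem_univ y⟩
    have coverCount_eq (y : Fin m) :
        coverCount (fun i => upperContour (R i) x) y = suppSize R y x := by
      simp [coverCount, upperContour, suppSize]
    rw [hSP.apply_eq_contourProb hF fun _ => rfl, huv x _ contour_subset,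
      contourProb_empty_eq hF hSP hA hN x ⟨0, by omega⟩]
    simp only [card_upperContour, coverCount_eq, filter_ne']

theorem exists_suppSize_eq_of_lt {s : ℕ} (hs : s ≤ n) :
    ∃ R : Profile n m, ∀ x y, x < y → suppSize R x y = s := by
  refine ⟨fun i => if (i : ℕ) < s then 1 else Fin.revPerm, fun x y hxy => ?_⟩
  have prefers_iff (i : Fin n) :
      (if (i : ℕ) < s then 1 else Fin.revPerm : Equiv.Perm (Fin m)) x <
        (if (i : ℕ) < s then 1 else Fin.revPerm : Equiv.Perm (Fin m)) y ↔ (i : ℕ) < s := by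
    split_ifs with h <;> simp [h, hxy, hxy.le]
  simp only [suppSize, prefers_iff]
  rw [Fin.card_filter_val_lt, min_eq_right hs]

theorem sum_sum_rank (R : Profile n m) (f : ℕ → ℝ) :
    ∑ x, ∑ i, f (R i x) = n * ∑ k ∈ range m, f k := by
  rw [sum_comm]
  simp only [fun i => Equiv.sum_comp (R i) fun k => f k, Fin.sum_univ_eq_sum_range, sum_const,
    card_univ, Fintype.card_fin, nsmul_eq_mul]

-- The total probability is `1` both at a profile where every pair is split `s : n - s` and at a
-- unanimous one.
theorem pair_add_eq_of_apply_eq_sub (hF : IsSDS F) (hm : 2 ≤ m) {D : ℝ} {U V : ℕ → ℝ}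
    (hV : V 0 = 0)
    (hUV : ∀ R x, F R x = D - ∑ i, U (R i x) - ∑ y with y ≠ x, V (suppSize R y x))
    {s : ℕ} (hs : s ≤ n) : V s + V (n - s) = V n := by
  have total {s : ℕ} (hs : s ≤ n) :
      m * (m - 1) * (V s + V (n - s)) = 2 * (m * D - n * ∑ k ∈ range m, U k - 1) := by
    obtain ⟨R, hR⟩ := exists_suppSize_eq_of_lt (m := m) hs
    have pair (x : Fin m) (_ : x ∈ univ) (y : Fin m) (_ : y ∈ univ) (hxy : x ≠ y) :
        V (suppSize R y x) + V (suppSize R x y) = V s + V (n - s) := by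
      rcases lt_or_gt_of_ne hxy with h | h
      · rw [suppSize_eq_sub R hxy, hR x y h, add_comm]
      · rw [suppSize_eq_sub R hxy.symm, hR y x h]
    have sum_pairs := two_mul_sum_sum_ne univ (fun x y => V (suppSize R y x)) _ pair
    have sum_one := hF.2 R
    simp only [hUV, sum_sub_distrib, sum_sum_rank, sum_const, card_univ, Fintype.card_fin,
      nsmul_eq_mul] at sum_one sum_pairs
    linarith
  have unanimous := total (Nat.zero_le n)
  rw [hV, zero_add, Nat.sub_zero, ← total hs] at unanimous
  exact (mul_left_cancel₀ (cast_mul_cast_sub_one_pos hm).ne' unanimous).symm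

theorem Strategyproof.exists_apply_eq_add (hSP : Strategyproof F) (hF : IsSDS F)
    (hA : Anonymous F) (hN : Neutral F) (hm : 2 ≤ m) (hn : 0 < n) :
    ∃ a b : ℕ → ℝ, (∀ k l, k ≤ l → l < m → a l ≤ a k) ∧ (∀ k < m, 0 ≤ a k) ∧ Monotone b ∧
      b 0 = 0 ∧ (∀ s ≤ n, b s + b (n - s) = b n) ∧
      ∀ R x, F R x = ∑ i, a (R i x) + ∑ y with y ≠ x, b (suppSize R x y) := by
  obtain ⟨D, U, V, hU, hVmono, hV, hUV⟩ := hSP.exists_apply_eq_sub hF hA hN hm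
  have pair (s : ℕ) (hs : s ≤ n) := pair_add_eq_of_apply_eq_sub hF hm hV hUV hs
  let a (k : ℕ) : ℝ := (D - (m - 1) * V n) / n - U k
  have apply_eq (R : Profile n m) (x : Fin m) :
      F R x = ∑ i, a (R i x) + ∑ y with y ≠ x, V (suppSize R x y) := by
    have reverse : ∀ y ∈ ({y | y ≠ x} : Finset (Fin m)),
        V (suppSize R y x) = V n - V (suppSize R x y) := by
      intro y hy
      rw [← pair _ (suppSize_le R y x), suppSize_eq_sub R (mem_filter.1 hy).2, add_sub_cancel_right]
    have : (n : ℝ) ≠ 0 := by positivity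
    rw [hUV, sum_congr rfl reverse, sum_sub_distrib, sum_sub_distrib, sum_const, sum_const,
      nsmul_eq_mul, nsmul_eq_mul, card_filter_ne, card_univ, Fintype.card_fin]
    field_simp
    ring
  have antitone (k l : ℕ) (hkl : k ≤ l) (hl : l < m) : a l ≤ a k :=
    sub_le_sub_left (hU k l hkl hl) _
  have last_nonneg : 0 ≤ a (m - 1) := by
    let last : Fin m := ⟨m - 1, by omega⟩
    have no_support (y : Fin m) : suppSize (fun _ : Fin n => 1) last y = 0 := by
      have : ¬ last < y := by
        simp only [last, Fin.lt_def]
        omega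
      simp [suppSize, this]
    have := hF.1 (fun _ => 1) last
    simpa [apply_eq, no_support, hV, last, hn] using this
  exact ⟨a, V, antitone,
    fun k hk => last_nonneg.trans (antitone k (m - 1) (by omega) (by omega)), hVmono, hV, pair,
    apply_eq⟩

theorem PointVoting.sum_pvVal (pv : PointVoting n m) (hn : 0 < n) (R : Profile n m) :
    ∑ x, pvVal pv R x = 1 := by
  have : (n : ℝ) ≠ 0 := by positivity
  simp only [pvVal, sum_sum_rank, pv.sum_eq]
  field_simp

theorem PointVoting.exists_eq_mul {a : ℕ → ℝ} (hm : 0 < m) (hn : 0 < n)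
    (mono : ∀ k l, k ≤ l → l < m → a l ≤ a k) (nonneg : ∀ k < m, 0 ≤ a k) :
    ∃ pv : PointVoting n m, ∀ k < m, a k = (n * ∑ j ∈ range m, a j) * pv.a k := by
  have hn' : (n : ℝ) ≠ 0 := by positivity
  have hm' : (m : ℝ) ≠ 0 := by positivity
  have nonneg' : ∀ k ∈ range m, 0 ≤ a k := fun k hk => nonneg k (mem_range.1 hk)
  have hsum := sum_nonneg nonneg'
  rcases hsum.eq_or_lt with hzero | hpos
  · refine ⟨⟨fun _ => 1 / (n * m), fun _ _ _ _ => le_rfl, fun _ _ => by positivity, ?_⟩,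
      fun k hk => ?_⟩
    · rw [sum_const, card_range, nsmul_eq_mul]
      field_simp
    · rw [← hzero, mul_zero, zero_mul]
      exact (sum_eq_zero_iff_of_nonneg nonneg').1 hzero.symm k (mem_range.2 hk)
  · refine ⟨⟨fun k => a k / (n * ∑ j ∈ range m, a j), fun k l hkl hl => ?_, fun k hk => ?_, ?_⟩,
      fun k _ => ?_⟩
    · have := mono k l hkl hl
      gcongr
    · exact div_nonneg (nonneg k hk) (by positivity)
    · rw [← sum_div]
      field_simp
    · field_simp

theorem SupportingSize.exists_eq_mul {b : ℕ → ℝ} (hm : 2 ≤ m) (mono : Monotone b)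
    (zero : b 0 = 0) (pair : ∀ s ≤ n, b s + b (n - s) = b n) :
    ∃ S : SupportingSize n m, ∀ k ≤ n, b k = (m * (m - 1) / 2 * b n) * S.b k := by
  have := cast_mul_cast_sub_one_pos hm
  have nonneg (k : ℕ) : 0 ≤ b k := zero ▸ mono (Nat.zero_le k)
  rcases (nonneg n).eq_or_lt with hzero | hpos
  · refine ⟨⟨fun _ => 1 / (m * (m - 1)), fun _ _ _ _ => le_rfl, fun _ _ => by positivity,
      fun _ _ => by ring⟩, fun k hk => ?_⟩
    rw [← hzero, mul_zero, zero_mul]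
    exact le_antisymm (hzero ▸ mono hk) (nonneg k)
  · have hscale : 0 < m * (m - 1) / 2 * b n := by positivity
    refine ⟨⟨fun k => b k / (m * (m - 1) / 2 * b n), fun k l hkl _ => ?_,
      fun k _ => div_nonneg (nonneg k) hscale.le, fun k hk => ?_⟩, fun k _ => ?_⟩
    · have := mono hkl
      gcongr
    · rw [← add_div, pair k hk]
      field_simp
    · rw [mul_div_cancel₀ _ hscale.ne']

theorem Strategyproof.exists_eq_convexCombination (hSP : Strategyproof F) (hF : IsSDS F)
    (hA : Anonymous F) (hN : Neutral F) (hm : 2 ≤ m) (hn : 0 < n) :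
    ∃ (γ : ℝ) (pv : PointVoting n m) (S : SupportingSize n m), 0 ≤ γ ∧ γ ≤ 1 ∧
      ∀ R x, F R x = γ * pvVal pv R x + (1 - γ) * ssVal S R x := by
  obtain ⟨a, b, amono, anonneg, bmono, bzero, bpair, apply_eq⟩ :=
    hSP.exists_apply_eq_add hF hA hN hm hn
  obtain ⟨pv, hpv⟩ := PointVoting.exists_eq_mul (n := n) (by omega) hn amono anonneg
  obtain ⟨S, hS⟩ := SupportingSize.exists_eq_mul hm bmono bzero bpair
  set γ := n * ∑ j ∈ range m, a j
  set δ := m * (m - 1) / 2 * b n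
  have mix (R : Profile n m) (x : Fin m) : F R x = γ * pvVal pv R x + δ * ssVal S R x := by
    rw [apply_eq, pvVal, ssVal, mul_sum, mul_sum]
    congr 1
    · exact sum_congr rfl fun i _ => hpv _ (R i x).isLt
    · exact sum_congr rfl fun y _ => hS _ (suppSize_le R x y)
  have weights : γ + δ = 1 := by
    have := hF.2 fun _ => 1
    simpa only [mix, sum_add_distrib, ← mul_sum, pv.sum_pvVal hn, (S.isSDS_ssVal hm).2, mul_one]
      using this
  have hγ : 0 ≤ γ :=
    mul_nonneg n.cast_nonneg (sum_nonneg fun k hk => anonneg k (mem_range.1 hk))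
  have hδ : 0 ≤ δ :=
    mul_nonneg (div_nonneg (cast_mul_cast_sub_one_nonneg m) zero_le_two)
      (bzero ▸ bmono (Nat.zero_le n))
  refine ⟨γ, pv, S, hγ, by linarith, fun R x => ?_⟩
  rw [mix, ← weights, add_sub_cancel_left]

/-! ### Condorcet winners with a small point voting score -/

theorem succ_mul_le_sum_of_antitone {A : ℕ → ℝ} {q s : ℕ} (nonneg : ∀ r ≤ q, 0 ≤ A r)
    (anti : ∀ r s, r ≤ s → s ≤ q → A s ≤ A r) (hs : s ≤ q) :
    (s + 1) * A s ≤ ∑ r ∈ range (q + 1), A r :=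
  calc (s + 1) * A s = ∑ _r ∈ range (s + 1), A s := by simp
    _ ≤ ∑ r ∈ range (s + 1), A r :=
        sum_le_sum fun r hr => anti r s (mem_range_succ_iff.1 hr) hs
    _ ≤ ∑ r ∈ range (q + 1), A r :=
        sum_le_sum_of_subset_of_nonneg (range_mono (by omega))
          fun r hr _ => nonneg r (mem_range_succ_iff.1 hr)

section CheapCover

variable {α : Type*} [DecidableEq α]

theorem coverCount_cons {k : ℕ} (T : Finset α) (S : Fin k → Finset α) (y : α) :
    coverCount (Fin.cons T S : Fin (k + 1) → Finset α) y =
      (if y ∈ T then 1 else 0) + coverCount S y := by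
  simp only [coverCount, Fin.card_filter_univ_succ, Fin.cons_zero, Fin.cons_succ]
  split_ifs <;> omega

/-- The family `S` extended by the two blocks `J` and `L \ J` of a set `L`. -/
def consSplit {k : ℕ} (J L : Finset α) (S : Fin k → Finset α) : Fin (k + 2) → Finset α :=
  Fin.cons J (Fin.cons (L \ J) S)

theorem coverCount_consSplit {k : ℕ} {J L : Finset α} (hJ : J ⊆ L) (S : Fin k → Finset α) (y : α) :
    coverCount (consSplit J L S) y = (if y ∈ L then 1 else 0) + coverCount S y := by
  rw [consSplit, coverCount_cons, coverCount_cons]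
  have := @hJ y
  grind

theorem consSplit_subset {k : ℕ} {I J L : Finset α} {S : Fin k → Finset α} (hJ : J ⊆ L)
    (hL : L ⊆ I) (hS : ∀ i, S i ⊆ I) (i : Fin (k + 2)) : consSplit J L S i ⊆ I := by
  refine Fin.cases (hJ.trans hL) (fun i => ?_) i
  exact Fin.cases (sdiff_subset.trans hL) hS i

theorem sum_consSplit {k : ℕ} (J L : Finset α) (S : Fin k → Finset α) (A : ℕ → ℝ) :
    ∑ i, A #(consSplit J L S i) = A #J + A #(L \ J) + ∑ i, A #(S i) := by
  simp [consSplit, Fin.sum_univ_succ, add_assoc]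

-- A block of uniformly random size has the right average cost.
theorem exists_split_le (A : ℕ → ℝ) (L : Finset α) :
    ∃ J ⊆ L, (#L + 1) * (A #J + A #(L \ J)) ≤ 2 * ∑ r ∈ range (#L + 1), A r := by
  have reflect : ∑ r ∈ range (#L + 1), A (#L - r) = ∑ r ∈ range (#L + 1), A r := by
    simpa using sum_range_reflect A (#L + 1)
  have total : ∑ r ∈ range (#L + 1), (#L + 1) * (A r + A (#L - r)) =
      ∑ r ∈ range (#L + 1), 2 * ∑ r ∈ range (#L + 1), A r := by
    rw [← mul_sum, sum_add_distrib, reflect, sum_const, card_range, nsmul_eq_mul]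
    push_cast
    ring
  obtain ⟨r, hr, hle⟩ := exists_le_of_sum_le nonempty_range_add_one total.le
  obtain ⟨J, hJ, rfl⟩ := exists_subset_card_eq (mem_range_succ_iff.1 hr)
  exact ⟨J, hJ, by rwa [card_sdiff_of_subset hJ]⟩

/-- A family of subsets of `I` that covers every point of `I` by just under half of its members
and in which the sizes of the members have a total `A`-cost of less than twice the average. -/
def IsCheapCover (A : ℕ → ℝ) (I : Finset α) {k : ℕ} (S : Fin k → Finset α) : Prop :=
  (∀ i, S i ⊆ I) ∧ (∀ y ∈ I, coverCount S y = (k - 1) / 2) ∧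
    (#I + 1) * ∑ i, A #(S i) < 2 * k * ∑ r ∈ range (#I + 1), A r

variable {A : ℕ → ℝ} {I L : Finset α}

theorem exists_split_le_of_subset (nonneg : ∀ r ≤ #I, 0 ≤ A r) (hL : L ⊆ I) :
    ∃ J ⊆ L, 0 ≤ A #J + A #(L \ J) ∧
      (#L + 1) * (A #J + A #(L \ J)) ≤ 2 * ∑ r ∈ range (#I + 1), A r := by
  obtain ⟨J, hJ, hle⟩ := exists_split_le A L
  refine ⟨J, hJ, add_nonneg (nonneg _ (card_le_card (hJ.trans hL)))
    (nonneg _ (card_le_card (sdiff_subset.trans hL))), hle.trans ?_⟩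
  gcongr 2 * ?_
  exact sum_le_sum_of_subset_of_nonneg (range_mono (by have := card_le_card hL; omega))
    fun r hr _ => nonneg r (mem_range_succ_iff.1 hr)

theorem exists_half_and_split_lt (nonneg : ∀ r ≤ #I, 0 ≤ A r)
    (pos : 0 < ∑ r ∈ range (#I + 1), A r) :
    ∃ J L, J ⊆ L ∧ L ⊆ I ∧ #I ≤ 2 * #(I \ L) + 1 ∧
      (#I + 1) * (A #J + A #(L \ J)) < 4 * ∑ r ∈ range (#I + 1), A r := by
  obtain ⟨L, hL, hLcard⟩ := exists_subset_card_eq (show (#I + 1) / 2 ≤ #I by omega)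
  obtain ⟨J, hJ, hnonneg, hle⟩ := exists_split_le_of_subset nonneg hL
  refine ⟨J, L, hJ, hL, by rw [card_sdiff_of_subset hL]; omega, ?_⟩
  have half : (#I : ℝ) ≤ 2 * #L := by exact_mod_cast (by omega : #I ≤ 2 * #L)
  rcases hnonneg.eq_or_lt with hzero | hpos
  · rw [← hzero]
    linarith
  · calc (#I + 1) * (A #J + A #(L \ J)) < 2 * (#L + 1) * (A #J + A #(L \ J)) :=
          mul_lt_mul_of_pos_right (by linarith) hpos
      _ ≤ 4 * ∑ r ∈ range (#I + 1), A r := by linarith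

theorem exists_isCheapCover_three (nonneg : ∀ r ≤ #I, 0 ≤ A r)
    (anti : ∀ r s, r ≤ s → s ≤ #I → A s ≤ A r) (pos : 0 < ∑ r ∈ range (#I + 1), A r) :
    ∃ S : Fin 3 → Finset α, IsCheapCover A I S := by
  obtain ⟨J, L, hJ, hL, hcard, hlt⟩ := exists_half_and_split_lt nonneg pos
  have rest_card := card_le_card (sdiff_subset : I \ L ⊆ I)
  have rest_le := succ_mul_le_sum_of_antitone nonneg anti rest_card
  have rest_nonneg := nonneg _ rest_card
  refine ⟨consSplit J L fun _ : Fin 1 => I \ L,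
    consSplit_subset hJ hL fun _ => sdiff_subset, fun y hy => ?_, ?_⟩
  · rw [coverCount_consSplit hJ]
    by_cases h : y ∈ L <;> simp [coverCount, h, hy]
  · rw [sum_consSplit, Fin.sum_univ_one]
    have half : (#I : ℝ) ≤ 2 * #(I \ L) + 1 := by exact_mod_cast hcard
    have rest_cost := mul_le_mul_of_nonneg_right
      (by linarith : (#I + 1 : ℝ) ≤ 2 * (#(I \ L) + 1)) rest_nonneg
    push_cast
    linarith

theorem exists_isCheapCover_four (nonneg : ∀ r ≤ #I, 0 ≤ A r)
    (pos : 0 < ∑ r ∈ range (#I + 1), A r) : ∃ S : Fin 4 → Finset α, IsCheapCover A I S := by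
  obtain ⟨J, L, hJ, hL, hcard, hlt⟩ := exists_half_and_split_lt nonneg pos
  obtain ⟨K, hK, rest_nonneg, rest_le⟩ := exists_split_le_of_subset nonneg
    (sdiff_subset : I \ L ⊆ I)
  refine ⟨consSplit J L (consSplit K (I \ L) Fin.elim0),
    consSplit_subset hJ hL (consSplit_subset hK sdiff_subset Fin.rec0), fun y hy => ?_, ?_⟩
  · rw [coverCount_consSplit hJ, coverCount_consSplit hK]
    by_cases h : y ∈ L <;> simp [coverCount, h, hy]
  · rw [sum_consSplit, sum_consSplit, Fin.sum_univ_zero]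
    have half : (#I : ℝ) ≤ 2 * #(I \ L) + 1 := by exact_mod_cast hcard
    have rest_cost := mul_le_mul_of_nonneg_right
      (by linarith : (#I + 1 : ℝ) ≤ 2 * (#(I \ L) + 1)) rest_nonneg
    push_cast
    linarith

theorem IsCheapCover.exists_add_two (nonneg : ∀ r ≤ #I, 0 ≤ A r) {k : ℕ} (hk : 0 < k)
    {S : Fin k → Finset α} (hS : IsCheapCover A I S) :
    ∃ S' : Fin (k + 2) → Finset α, IsCheapCover A I S' := by
  obtain ⟨hsub, hcover, hcost⟩ := hS
  obtain ⟨J, hJ, hle⟩ := exists_split_le A I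
  have hsum : 0 ≤ ∑ r ∈ range (#I + 1), A r :=
    sum_nonneg fun r hr => nonneg r (mem_range_succ_iff.1 hr)
  refine ⟨consSplit J I S, consSplit_subset hJ subset_rfl hsub, fun y hy => ?_, ?_⟩
  · rw [coverCount_consSplit hJ, if_pos hy, hcover y hy]
    omega
  · rw [sum_consSplit]
    push_cast
    linarith

theorem exists_isCheapCover (nonneg : ∀ r ≤ #I, 0 ≤ A r)
    (anti : ∀ r s, r ≤ s → s ≤ #I → A s ≤ A r) (pos : 0 < ∑ r ∈ range (#I + 1), A r) :
    ∀ k ≥ 3, ∃ S : Fin k → Finset α, IsCheapCover A I S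
  | 3, _ => exists_isCheapCover_three nonneg anti pos
  | 4, _ => exists_isCheapCover_four nonneg pos
  | k + 5, _ =>
    let ⟨_, hS⟩ := exists_isCheapCover nonneg anti pos (k + 3) (by omega)
    hS.exists_add_two nonneg (by omega)

end CheapCover

theorem PointVoting.exists_suppSize_eq_and_pvVal_lt (pv : PointVoting n m) (hm : 0 < m)
    (hn : 3 ≤ n) : ∃ (R : Profile n m) (x : Fin m),
      (∀ y, y ≠ x → suppSize R y x = (n - 1) / 2) ∧ pvVal pv R x < 2 / m := by
  let x : Fin m := ⟨0, hm⟩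
  have card_add_one : #(univ.erase x) + 1 = m := by
    rw [card_erase_add_one (mem_univ x), card_univ, Fintype.card_fin]
  obtain ⟨S, hsub, hcover, hcost⟩ := exists_isCheapCover (A := pv.a) (I := univ.erase x)
    (fun r hr => pv.nonneg r (by omega)) (fun r s hrs hs => pv.mono r s hrs (by omega))
    (by rw [card_add_one, pv.sum_eq]; positivity) n hn
  have contour (i : Fin n) : upperContour (contourRanking (S i) x) x = S i :=
    upperContour_contourRanking fun h => notMem_erase x univ (hsub i h)
  refine ⟨fun i => contourRanking (S i) x, x, fun y hy => ?_, ?_⟩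
  · have mem_iff (i : Fin n) :
        contourRanking (S i) x y < contourRanking (S i) x x ↔ y ∈ S i := by
      rw [← mem_upperContour, contour]
    simp only [suppSize, mem_iff]
    exact hcover y (mem_erase.2 ⟨hy, mem_univ y⟩)
  · have rank_eq (i : Fin n) : (contourRanking (S i) x x : ℕ) = #(S i) := by
      rw [← card_upperContour, contour]
    have cast_card : (#(univ.erase x) + 1 : ℝ) = m := mod_cast card_add_one
    have n_mul_sum : (n : ℝ) * ∑ r ∈ range m, pv.a r = 1 := by
      rw [pv.sum_eq]
      field_simp
    simp only [pvVal, rank_eq]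
    rw [card_add_one, cast_card, mul_assoc, n_mul_sum, mul_one] at hcost
    rwa [lt_div_iff₀' (by positivity)]

/-! ### Uniqueness -/

theorem SupportingSize.b_eq_copelandWeight (S : SupportingSize n m) (h : S.b ((n - 1) / 2) = 0)
    {k : ℕ} (hk : k ≤ n) : S.b k = copelandWeight n m k := by
  have b_eq_zero {j : ℕ} (hj : 2 * j < n) : S.b j = 0 :=
    le_antisymm (h ▸ S.mono j _ (by omega) (by omega)) (S.nonneg j (by omega))
  have pair := S.pair_eq k hk
  rcases lt_trichotomy (2 * k) n with minority | tie | majority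
  · rw [b_eq_zero minority, copelandWeight, if_neg (by omega), if_neg (by omega)]
  · rw [show n - k = k by omega, ← two_mul] at pair
    rw [copelandWeight, if_neg (by omega), if_pos tie]
    linear_combination pair / 2
  · rw [b_eq_zero (j := n - k) (by omega), add_zero] at pair
    rw [pair, copelandWeight, if_pos majority]

theorem SupportingSize.ssVal_eq_randCopeland (S : SupportingSize n m)
    (h : S.b ((n - 1) / 2) = 0) : ssVal S = randCopeland n m := by
  funext R x
  exact sum_congr rfl fun y _ => S.b_eq_copelandWeight h (suppSize_le R x y)

theorem SupportingSize.b_eq_zero_of_le_ssVal (S : SupportingSize n m) (hm : 2 ≤ m) (hn : 0 < n)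
    {R : Profile n m} {x : Fin m} (hR : ∀ y, y ≠ x → suppSize R y x = (n - 1) / 2)
    (h : 2 / (m : ℝ) ≤ ssVal S R x) : S.b ((n - 1) / 2) = 0 := by
  have hpos := cast_sub_one_pos hm
  have ssVal_eq : ssVal S R x = (m - 1) * S.b (n - (n - 1) / 2) := by
    rw [← card_filter_ne x, ← nsmul_eq_mul, ← sum_const]
    refine sum_congr rfl fun y hy => ?_
    have hy := (mem_filter.1 hy).2
    rw [suppSize_eq_sub R hy, hR y hy]
  have pair : (m - 1) * (S.b ((n - 1) / 2) + S.b (n - (n - 1) / 2)) = 2 / (m : ℝ) := by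
    rw [S.pair_eq _ (by omega)]
    field_simp
  refine le_antisymm ?_ (S.nonneg _ (by omega))
  refine nonpos_of_mul_nonpos_right ?_ hpos
  linarith

theorem eq_randCopeland {F : Profile n m → Fin m → ℝ} (hm : 2 ≤ m) (hn : 3 ≤ n) (hF : IsSDS F)
    (hSP : Strategyproof F) (hA : Anonymous F) (hN : Neutral F)
    (hC : CondorcetConsistent F (2 / (m : ℝ))) : F = randCopeland n m := by
  obtain ⟨γ, pv, S, γ_nonneg, γ_le_one, hFeq⟩ :=
    hSP.exists_eq_convexCombination hF hA hN hm (by omega)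
  obtain ⟨R, x, hR, pv_lt⟩ := pv.exists_suppSize_eq_and_pvVal_lt (by omega) hn
  have winner : CondorcetWinner R x := fun y hy => by
    rw [suppSize_eq_sub R hy, hR y hy]
    omega
  have le_mix : 2 / (m : ℝ) ≤ γ * pvVal pv R x + (1 - γ) * ssVal S R x :=
    (hC R x winner).trans_eq (hFeq R x)
  have ss_le := S.ssVal_le hm R x
  have γ_eq_zero : γ = 0 := by nlinarith
  have F_eq : F = ssVal S := by
    funext R x
    simp [hFeq, γ_eq_zero]
  rw [F_eq]
  exact S.ssVal_eq_randCopeland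
    (S.b_eq_zero_of_le_ssVal hm (by omega) hR (by simpa [γ_eq_zero] using le_mix))

theorem randCopeland_unique_general (n m : ℕ) (hm : 2 ≤ m) (hn : 3 ≤ n) :
    (IsSDS (randCopeland n m) ∧ Strategyproof (randCopeland n m) ∧
      Anonymous (randCopeland n m) ∧ Neutral (randCopeland n m) ∧
      CondorcetConsistent (randCopeland n m) (2 / (m : ℝ))) ∧
    (∀ F : Profile n m → Fin m → ℝ,
      IsSDS F → Strategyproof F → Anonymous F → Neutral F →
      CondorcetConsistent F (2 / (m : ℝ)) → F = randCopeland n m) := by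
  refine ⟨?_, fun _ hF hSP hA hN hC => eq_randCopeland hm hn hF hSP hA hN hC⟩
  have consistent : CondorcetConsistent (randCopeland n m) (2 / (m : ℝ)) :=
    condorcetConsistent_randCopeland hm
  rw [← SupportingSize.ssVal_copeland] at consistent ⊢
  let copeland := SupportingSize.copeland n m
  exact ⟨copeland.isSDS_ssVal hm, copeland.strategyproof_ssVal, copeland.anonymous_ssVal,
    copeland.neutral_ssVal, consistent⟩

/-- For `m ≥ 3` and `n ≥ 3`, the randomized Copeland rule is the
unique SDS that is strategyproof, anonymous, neutral, and
`2/m`-Condorcet-consistent. -/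
theorem randCopeland_unique (n m : ℕ) (hm : 3 ≤ m) (hn : 3 ≤ n) :
    (IsSDS (randCopeland n m) ∧ Strategyproof (randCopeland n m) ∧
      Anonymous (randCopeland n m) ∧ Neutral (randCopeland n m) ∧
      CondorcetConsistent (randCopeland n m) (2 / (m : ℝ))) ∧
    (∀ F : Profile n m → Fin m → ℝ,
      IsSDS F → Strategyproof F → Anonymous F → Neutral F →
      CondorcetConsistent F (2 / (m : ℝ)) → F = randCopeland n m) :=
  randCopeland_unique_general n m (by omega) hn
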